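/- Assume the continuous residual r satisfies r' ∈ L¹(Ω). Then there exists a constant c > 0 depending only on Ω, a, b and c such that for every N > c and every equidistributing mesh, the intensity parameter α_h satisfies (1 + (c/N)^{2/3})^{−3/2} ‖r‖_{L^{2/3}(Ω)} ≤ √α_h ≤ (1 − (c/N)^{2/3})^{−3/2} ( ‖r‖_{L^{2/3}(Ω)}^{2/3} + (c ‖r'‖_{L¹(Ω)} / N)^{2/3} )^{3/2}. -/

import Mathlib

/-!
Setting of Huang–He, "Error analysis for equidistributing meshes":
the boundary value problem  −(a u')' + b u' + c u = f on Ω = (0,1), u(0)=u(1)=0,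
its linear finite element discretization on a mesh 0 = x₀ < ⋯ < x_N = 1,
and the residual-based equidistribution quantities.
-/

noncomputable section
open MeasureTheory Real

namespace EquidMesh

/-- L² norm on (0,1). -/
def L2 (g : ℝ → ℝ) : ℝ := Real.sqrt (∫ t in (0:ℝ)..1, (g t)^2)

/-- L¹ norm on (0,1). -/
def L1 (g : ℝ → ℝ) : ℝ := ∫ t in (0:ℝ)..1, |g t|

/-- The L^{2/3} quasi-norm on (0,1): (∫₀¹ |g|^{2/3})^{3/2}. -/
def Lp23 (g : ℝ → ℝ) : ℝ := (∫ t in (0:ℝ)..1, |g t| ^ ((2:ℝ)/3)) ^ ((3:ℝ)/2)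

/-- L^∞ norm (essential supremum of |g|) on (0,1). -/
def Linf (g : ℝ → ℝ) : ℝ := essSup (fun t => |g t|) (volume.restrict (Set.Ioo (0:ℝ) 1))

/-- Membership in L²(0,1). -/
def MemL2 (g : ℝ → ℝ) : Prop :=
  Measurable g ∧ IntervalIntegrable (fun t => (g t)^2) volume 0 1

/-- Membership in L^∞(0,1). -/
def MemLinf (g : ℝ → ℝ) : Prop :=
  Measurable g ∧ ∃ M : ℝ, ∀ᵐ x ∂(volume.restrict (Set.Ioo (0:ℝ) 1)), |g x| ≤ M

/-- `g` is absolutely continuous on [0,1] with derivative `g' ∈ L¹(0,1)`. -/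
def HasL1Deriv (g g' : ℝ → ℝ) : Prop :=
  Measurable g' ∧ IntervalIntegrable g' volume 0 1 ∧
    ∀ x ∈ Set.Icc (0:ℝ) 1, g x = g 0 + ∫ t in (0:ℝ)..x, g' t

/-- A function in H¹(0,1): absolutely continuous on [0,1], carried together with its
(a.e.) derivative, which lies in L²(0,1). -/
structure H1 where
  val : ℝ → ℝ
  dval : ℝ → ℝ
  dval_meas : Measurable dval
  dval_int : IntervalIntegrable dval volume 0 1
  dval_sq_int : IntervalIntegrable (fun t => (dval t)^2) volume 0 1
  ftc : ∀ x ∈ Set.Icc (0:ℝ) 1, val x = val 0 + ∫ t in (0:ℝ)..x, dval t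

/-- `u ∈ H²(0,1)`: the derivative `u'` is absolutely continuous with `u'' ∈ L²(0,1)`. -/
def H1.IsH2 (u : H1) : Prop :=
  ∃ u'' : ℝ → ℝ, Measurable u'' ∧ IntervalIntegrable u'' volume 0 1 ∧
    IntervalIntegrable (fun t => (u'' t)^2) volume 0 1 ∧
    ∀ x ∈ Set.Icc (0:ℝ) 1, u.dval x = u.dval 0 + ∫ t in (0:ℝ)..x, u'' t

/-- The coefficients of the elliptic problem on Ω = (0,1):
`a, b ∈ W^{1,∞}(Ω)`, `c ∈ L^∞(Ω)`, `a ≥ a₀ > 0`, and `c − b'/2 ≥ 0` a.e. -/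
structure Coeffs where
  a : ℝ → ℝ
  b : ℝ → ℝ
  c : ℝ → ℝ
  a' : ℝ → ℝ
  b' : ℝ → ℝ
  a0 : ℝ
  a0_pos : 0 < a0
  a_lb : ∀ x ∈ Set.Icc (0:ℝ) 1, a0 ≤ a x
  a'_meas : Measurable a'
  b'_meas : Measurable b'
  c_meas : Measurable c
  a'_int : IntervalIntegrable a' volume 0 1
  b'_int : IntervalIntegrable b' volume 0 1
  a'_bdd : ∃ M : ℝ, ∀ᵐ x ∂(volume.restrict (Set.Ioo (0:ℝ) 1)), |a' x| ≤ M
  b'_bdd : ∃ M : ℝ, ∀ᵐ x ∂(volume.restrict (Set.Ioo (0:ℝ) 1)), |b' x| ≤ M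
  c_bdd : ∃ M : ℝ, ∀ᵐ x ∂(volume.restrict (Set.Ioo (0:ℝ) 1)), |c x| ≤ M
  ftc_a : ∀ x ∈ Set.Icc (0:ℝ) 1, a x = a 0 + ∫ t in (0:ℝ)..x, a' t
  ftc_b : ∀ x ∈ Set.Icc (0:ℝ) 1, b x = b 0 + ∫ t in (0:ℝ)..x, b' t
  cb_nonneg : ∀ᵐ x ∂(volume.restrict (Set.Ioo (0:ℝ) 1)), 0 ≤ c x - b' x / 2

/-- The bilinear form B(u,v) = ∫₀¹ (a u' v' + b u' v + c u v) dx. -/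
def Coeffs.B (P : Coeffs) (u v : H1) : ℝ :=
  ∫ t in (0:ℝ)..1,
    (P.a t * u.dval t * v.dval t + P.b t * u.dval t * v.val t + P.c t * u.val t * v.val t)

/-- The right-hand side functional (f, v) = ∫₀¹ f v dx. -/
def ip (f : ℝ → ℝ) (v : H1) : ℝ := ∫ t in (0:ℝ)..1, f t * v.val t

/-- `u ∈ H¹₀(Ω)` is the weak solution: B(u,v) = (f,v) for all v ∈ H¹₀(Ω). -/
def Coeffs.IsWeakSolution (P : Coeffs) (f : ℝ → ℝ) (u : H1) : Prop :=
  u.val 0 = 0 ∧ u.val 1 = 0 ∧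
    ∀ v : H1, v.val 0 = 0 → v.val 1 = 0 → P.B u v = ip f v

/-- A mesh of N elements of Ω = (0,1): 0 = x₀ < x₁ < ⋯ < x_N = 1. -/
structure Mesh (N : ℕ) where
  x : ℕ → ℝ
  x_zero : x 0 = 0
  x_last : x N = 1
  x_mono : ∀ i < N, x i < x (i+1)

/-- Element length (the element of index `i` is `(x i, x (i+1))`, `0 ≤ i < N`). -/
def Mesh.h {N : ℕ} (m : Mesh N) (i : ℕ) : ℝ := m.x (i+1) - m.x i

/-- `v` is piecewise linear with respect to the mesh: its derivative is constant
inside each element. -/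
def Mesh.IsPL {N : ℕ} (m : Mesh N) (v : H1) : Prop :=
  ∀ i < N, ∃ s : ℝ, ∀ t ∈ Set.Ioo (m.x i) (m.x (i+1)), v.dval t = s

/-- `uh` is the linear finite element solution on the mesh `m`:
a continuous piecewise linear function vanishing at 0 and 1 with
B(u_h, v_h) = (f, v_h) for all piecewise linear v_h vanishing at 0 and 1. -/
def Coeffs.IsFESolution (P : Coeffs) (f : ℝ → ℝ) {N : ℕ} (m : Mesh N) (uh : H1) : Prop :=
  uh.val 0 = 0 ∧ uh.val 1 = 0 ∧ m.IsPL uh ∧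
    ∀ v : H1, v.val 0 = 0 → v.val 1 = 0 → m.IsPL v → P.B uh v = ip f v

/-- The residual of `w`: r = f + a' w' − b w' − c w. -/
def Coeffs.res (P : Coeffs) (f : ℝ → ℝ) (w : H1) : ℝ → ℝ :=
  fun t => f t + P.a' t * w.dval t - P.b t * w.dval t - P.c t * w.val t

/-- The element L² average ⟨g⟩_i = (h_i⁻¹ ∫_{K_i} g²)^{1/2}. -/
def Mesh.avg {N : ℕ} (m : Mesh N) (g : ℝ → ℝ) (i : ℕ) : ℝ :=
  Real.sqrt ((1 / m.h i) * ∫ t in (m.x i)..(m.x (i+1)), (g t)^2)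

/-- The intensity parameter α_h = (Σ_i h_i ⟨g⟩_i^{2/3})³. -/
def Mesh.alpha {N : ℕ} (m : Mesh N) (g : ℝ → ℝ) : ℝ :=
  (∑ i ∈ Finset.range N, m.h i * (m.avg g i) ^ ((2:ℝ)/3)) ^ 3

/-- The adaptation function value ρ_i = (1 + α_h⁻¹ ⟨g⟩_i²)^{1/3}. -/
def Mesh.rho {N : ℕ} (m : Mesh N) (g : ℝ → ℝ) (i : ℕ) : ℝ :=
  (1 + (m.alpha g)⁻¹ * (m.avg g i)^2) ^ ((1:ℝ)/3)

/-- σ_h = Σ_i ρ_i h_i. -/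
def Mesh.sigma {N : ℕ} (m : Mesh N) (g : ℝ → ℝ) : ℝ :=
  ∑ i ∈ Finset.range N, m.rho g i * m.h i

/-- The mesh equidistributes (the piecewise constant adaptation function built from) `g`:
ρ_i h_i = σ_h / N for all elements. -/
def Mesh.IsEquidistributing {N : ℕ} (m : Mesh N) (g : ℝ → ℝ) : Prop :=
  ∀ i < N, m.rho g i * m.h i = m.sigma g / (N:ℝ)

/-- Membership in the mesh set S_N: 1/(ρ₀ N) ≤ h_i ≤ 2/N for all i. -/
def Mesh.InS {N : ℕ} (m : Mesh N) (ρ0 : ℝ) : Prop :=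
  ∀ i < N, 1 / (ρ0 * (N:ℝ)) ≤ m.h i ∧ m.h i ≤ 2 / (N:ℝ)

/-- The maximum norm distance ‖X − X̃‖_∞ between two meshes with the same N. -/
def meshDist {N : ℕ} (m m' : Mesh N) : ℝ :=
  (Finset.range (N+1)).sup' (Finset.nonempty_range_iff.mpr (Nat.succ_ne_zero N))
    (fun i => |m.x i - m'.x i|)

/-- The energy norm squared ‖v‖_E² = ∫₀¹ (a v'² + (c − b'/2) v²) dx. -/
def Coeffs.energySq (P : Coeffs) (v : H1) : ℝ :=
  ∫ t in (0:ℝ)..1, (P.a t * (v.dval t)^2 + (P.c t - P.b' t / 2) * (v.val t)^2)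

/-!
Write `β(g) = ∑ᵢ hᵢ ⟨g⟩ᵢ^(2/3)`, so that `√α_h = β(r_h)^(3/2)`; it is a discrete version of
`∫ |g|^(2/3) = ‖g‖_{L^{2/3}}^(2/3)`. On every mesh it dominates this integral (Jensen on each
element) and is at most `‖g‖₂^(2/3)` (Jensen across the elements); it is subadditive; and it exceeds
the integral by at most `(maxᵢ hᵢ · ‖g'‖₁)^(2/3)`, since `g` oscillates by at most `∫_{Kᵢ} |g'|` on
`Kᵢ`.

Everything thus reduces to `β(r - r_h) ≤ (c/N)^(2/3) β(r_h)`. By coercivity, Galerkin orthogonality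
and nodal interpolation of the error, `a₀ ‖(u - u_h)'‖₂` is at most the `ℓ²` norm of
`hᵢ ‖r_h‖_{L²(Kᵢ)}`. The square of this number is the cube of the contribution `hᵢ ⟨r_h⟩ᵢ^(2/3)` of
`Kᵢ` to `β(r_h)`, and equidistribution bounds that contribution by `2 β(r_h) / N`. Hence
`‖r - r_h‖₂`, which is controlled by `‖(u - u_h)'‖₂`, is at most `(c/N) √α_h`.
-/

section Lebesgue

variable {α E F : Type*} [MeasurableSpace α] {μ : Measure α} [NormedAddCommGroup E]
  [NormedAddCommGroup F] {p q : ENNReal}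

lemma lpNorm_rpow_toReal {f : α → E} (hp : p ≠ 0) (hp' : p ≠ ⊤) (hf : AEStronglyMeasurable f μ) :
    lpNorm f p μ ^ p.toReal = ∫ x, ‖f x‖ ^ p.toReal ∂μ := by
  rw [lpNorm_eq_integral_norm_rpow_toReal hp hp' hf, Real.rpow_inv_rpow
    (integral_nonneg fun _ => by positivity) (ENNReal.toReal_ne_zero.2 ⟨hp, hp'⟩)]

lemma lpNorm_two_sq {f : α → ℝ} (hf : AEStronglyMeasurable f μ) :
    lpNorm f 2 μ ^ 2 = ∫ x, f x ^ 2 ∂μ := by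
  simpa using lpNorm_rpow_toReal two_ne_zero ENNReal.ofNat_ne_top hf

lemma lpNorm_congr_ae {f g : α → E} (h : f =ᵐ[μ] g) : lpNorm f p μ = lpNorm g p μ := by
  by_cases hf : AEStronglyMeasurable f μ
  · rw [← toReal_eLpNorm hf, ← toReal_eLpNorm (hf.congr h), eLpNorm_congr_ae h]
  · rw [lpNorm_of_not_aestronglyMeasurable hf,
      lpNorm_of_not_aestronglyMeasurable fun hg => hf (hg.congr h.symm)]

lemma lpNorm_le_mul_of_ae_le_mul {f : α → E} {g : α → F} {M : ℝ} (hM : 0 ≤ M) (hg : MemLp g p μ)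
    (h : ∀ᵐ x ∂μ, ‖f x‖ ≤ M * ‖g x‖) : lpNorm f p μ ≤ M * lpNorm g p μ := by
  by_cases hf : AEStronglyMeasurable f μ
  · rw [← toReal_eLpNorm hf, ← toReal_eLpNorm hg.1, ← ENNReal.toReal_ofReal hM,
      ← ENNReal.toReal_mul]
    exact ENNReal.toReal_mono (ENNReal.mul_ne_top ENNReal.ofReal_ne_top hg.2.ne)
      (eLpNorm_le_mul_eLpNorm_of_ae_le_mul h p)
  · rw [lpNorm_of_not_aestronglyMeasurable hf]
    exact mul_nonneg hM lpNorm_nonneg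

lemma lpNorm_mul_le_lpNorm_top_mul_lpNorm {f g : α → ℝ} (hf : MemLp f ⊤ μ) (hg : MemLp g p μ) :
    lpNorm (fun x => f x * g x) p μ ≤ lpNorm f ⊤ μ * lpNorm g p μ := by
  refine lpNorm_le_mul_of_ae_le_mul lpNorm_nonneg hg ?_
  filter_upwards [ae_le_lpNorm_exponent_top hf] with x hx
  rw [norm_mul]
  gcongr

lemma lpNorm_le_mul_rpow_measureReal_univ_of_ae_le [IsFiniteMeasure μ] {f : α → E} {M : ℝ}
    (hM : 0 ≤ M) (hp : p ≠ 0) (hp' : p ≠ ⊤) (h : ∀ᵐ x ∂μ, ‖f x‖ ≤ M) :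
    lpNorm f p μ ≤ M * μ.real Set.univ ^ p.toReal⁻¹ := by
  rw [← one_mul (μ.real Set.univ ^ p.toReal⁻¹), ← norm_one (α := ℝ), ← lpNorm_const' hp hp']
  exact lpNorm_le_mul_of_ae_le_mul hM (memLp_const _) (by simpa using h)

lemma lpNorm_le_lpNorm_mul_rpow_measureReal_univ [IsFiniteMeasure μ] {f : α → E}
    (hp : p ≠ 0) (hpq : p ≤ q) (hf : MemLp f q μ) :
    lpNorm f p μ ≤ lpNorm f q μ * μ.real Set.univ ^ (1 / p.toReal - 1 / q.toReal) := by
  have hexp : 0 ≤ 1 / p.toReal - 1 / q.toReal := by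
    rcases eq_or_ne q ⊤ with rfl | hq
    · simp
    · exact sub_nonneg.2 (one_div_le_one_div_of_le
        (ENNReal.toReal_pos hp (ne_top_of_le_ne_top hq hpq)) (ENNReal.toReal_mono hq hpq))
  rw [← toReal_eLpNorm hf.1, ← toReal_eLpNorm hf.1, Measure.real, ENNReal.toReal_rpow,
    ← ENNReal.toReal_mul]
  exact ENNReal.toReal_mono (ENNReal.mul_ne_top hf.2.ne
    (ENNReal.rpow_ne_top_of_nonneg hexp (measure_ne_top μ _)))
    (eLpNorm_le_eLpNorm_mul_rpow_measure_univ hpq hf.1)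

lemma integral_norm_rpow_le_lpNorm_rpow_mul [IsFiniteMeasure μ] {f : α → E} {s : ℝ} (hs : 0 < s)
    (hsq : ENNReal.ofReal s ≤ q) (hf : MemLp f q μ) :
    ∫ x, ‖f x‖ ^ s ∂μ ≤ lpNorm f q μ ^ s * μ.real Set.univ ^ (1 - s / q.toReal) := by
  have hs' : (ENNReal.ofReal s).toReal = s := ENNReal.toReal_ofReal hs.le
  have hp : ENNReal.ofReal s ≠ 0 := (ENNReal.ofReal_pos.2 hs).ne'
  have hint := lpNorm_rpow_toReal hp ENNReal.ofReal_ne_top hf.1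
  have hle := lpNorm_le_lpNorm_mul_rpow_measureReal_univ hp hsq hf
  rw [hs'] at hint hle
  calc ∫ x, ‖f x‖ ^ s ∂μ = lpNorm f (ENNReal.ofReal s) μ ^ s := hint.symm
    _ ≤ (lpNorm f q μ * μ.real Set.univ ^ (1 / s - 1 / q.toReal)) ^ s :=
        Real.rpow_le_rpow lpNorm_nonneg hle hs.le
    _ = lpNorm f q μ ^ s * μ.real Set.univ ^ (1 - s / q.toReal) := by
        rw [Real.mul_rpow lpNorm_nonneg (by positivity), ← Real.rpow_mul measureReal_nonneg]
        congr 2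
        field_simp

lemma integrable_norm_rpow [IsFiniteMeasure μ] {f : α → E} {s : ℝ} (hs : 0 < s)
    (hsq : ENNReal.ofReal s ≤ q) (hf : MemLp f q μ) : Integrable (fun x => ‖f x‖ ^ s) μ := by
  simpa [ENNReal.toReal_ofReal hs.le] using
    (hf.mono_exponent hsq).integrable_norm_rpow (ENNReal.ofReal_pos.2 hs).ne' ENNReal.ofReal_ne_top

lemma integral_norm_le_lpNorm_two_mul_sqrt [IsFiniteMeasure μ] {f : α → E} (hf : MemLp f 2 μ) :
    ∫ x, ‖f x‖ ∂μ ≤ lpNorm f 2 μ * √(μ.real Set.univ) := by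
  have hle := integral_norm_rpow_le_lpNorm_rpow_mul one_pos (by simp) hf
  rw [Real.sqrt_eq_rpow]
  norm_num at hle ⊢
  exact hle

lemma integral_mul_le_lpNorm_two_mul_lpNorm_two {f g : α → ℝ} (hf : MemLp f 2 μ)
    (hg : MemLp g 2 μ) : ∫ x, f x * g x ∂μ ≤ lpNorm f 2 μ * lpNorm g 2 μ := by
  have holder := integral_mul_norm_le_Lp_mul_Lq (μ := μ) (f := f) (g := g)
    Real.HolderConjugate.two_two (by simpa using hf) (by simpa using hg)
  rw [lpNorm_eq_integral_norm_rpow_toReal two_ne_zero ENNReal.ofNat_ne_top hf.1,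
    lpNorm_eq_integral_norm_rpow_toReal two_ne_zero ENNReal.ofNat_ne_top hg.1]
  refine le_trans (integral_mono (hf.integrable_mul hg) (hf.norm.integrable_mul hg.norm)
    fun x => (le_abs_self _).trans_eq (abs_mul _ _)) ?_
  simpa using holder

lemma lpNorm_two_sub_average_le [IsFiniteMeasure μ] {f : α → ℝ} (hf : MemLp f 2 μ) :
    lpNorm (fun x => f x - ⨍ y, f y ∂μ) 2 μ ≤ lpNorm f 2 μ := by
  have hf₁ : Integrable f μ := hf.integrable one_le_two
  set c := ⨍ y, f y ∂μ with hc
  have hmean : ∫ x, f x ∂μ = μ.real Set.univ * c := by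
    rw [hc, ← smul_eq_mul, measure_smul_average]
  have hlin : Integrable (fun x => 2 * c * f x - c ^ 2) μ :=
    (hf₁.const_mul _).sub (integrable_const _)
  have hexpand : ∫ x, (f x - c) ^ 2 ∂μ = ∫ x, f x ^ 2 ∂μ - μ.real Set.univ * c ^ 2 :=
    calc ∫ x, (f x - c) ^ 2 ∂μ = ∫ x, (f x ^ 2 - (2 * c * f x - c ^ 2)) ∂μ := by
          congr 1; ext x; ring
      _ = ∫ x, f x ^ 2 ∂μ - (2 * c * ∫ x, f x ∂μ - μ.real Set.univ * c ^ 2) := by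
          rw [integral_sub hf.integrable_sq hlin, integral_sub (hf₁.const_mul _)
            (integrable_const _), integral_const_mul, integral_const, smul_eq_mul]
      _ = ∫ x, f x ^ 2 ∂μ - μ.real Set.univ * c ^ 2 := by rw [hmean]; ring
  have hfc : MemLp (fun x => f x - c) 2 μ := hf.sub (memLp_const c)
  refine (pow_le_pow_iff_left₀ lpNorm_nonneg lpNorm_nonneg two_ne_zero).1 ?_
  rw [lpNorm_two_sq hf.1, lpNorm_two_sq hfc.1, hexpand]
  exact sub_le_self _ (by positivity)

end Lebesgue

/-- `F` is absolutely continuous on the interval with endpoints `a` and `b`, with integrable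
derivative `f`; encoded by the fundamental theorem of calculus, as in `H1` and `HasL1Deriv`. -/
def IsPrimitiveOn (F f : ℝ → ℝ) (a b : ℝ) : Prop :=
  IntervalIntegrable f volume a b ∧ ∀ x ∈ Set.uIcc a b, F x = F a + ∫ t in a..x, f t

namespace IsPrimitiveOn

variable {F G f g : ℝ → ℝ} {a b p q : ℝ}

lemma integral_eq_sub (h : IsPrimitiveOn F f a b) (hp : p ∈ Set.uIcc a b)
    (hq : q ∈ Set.uIcc a b) : ∫ t in p..q, f t = F q - F p := by
  rw [h.2 p hp, h.2 q hq, add_sub_add_left_eq_sub, intervalIntegral.integral_interval_sub_left]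
  exacts [h.1.mono_set (Set.uIcc_subset_uIcc_left hq), h.1.mono_set (Set.uIcc_subset_uIcc_left hp)]

lemma mono (h : IsPrimitiveOn F f a b) (hp : p ∈ Set.uIcc a b) (hq : q ∈ Set.uIcc a b) :
    IsPrimitiveOn F f p q :=
  ⟨h.1.mono_set (Set.uIcc_subset_uIcc hp hq), fun x hx => by
    rw [h.integral_eq_sub hp (Set.uIcc_subset_uIcc hp hq hx), add_sub_cancel]⟩

lemma continuousOn (h : IsPrimitiveOn F f a b) : ContinuousOn F (Set.uIcc a b) :=
  (continuousOn_const.add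
    (intervalIntegral.continuousOn_primitive_interval' h.1 Set.left_mem_uIcc)).congr h.2

lemma memLp_top (h : IsPrimitiveOn F f a b) : MemLp F ⊤ (volume.restrict (Set.uIoc a b)) := by
  obtain ⟨M, hM⟩ := isCompact_uIcc.exists_bound_of_continuousOn h.continuousOn
  exact memLp_top_of_bound
    ((h.continuousOn.mono Set.uIoc_subset_uIcc).aestronglyMeasurable measurableSet_uIoc) M
    (ae_restrict_of_forall_mem measurableSet_uIoc fun x hx => hM x (Set.uIoc_subset_uIcc hx))

lemma sub (hF : IsPrimitiveOn F f a b) (hG : IsPrimitiveOn G g a b) :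
    IsPrimitiveOn (fun t => F t - G t) (fun t => f t - g t) a b := by
  refine ⟨hF.1.sub hG.1, fun x hx => ?_⟩
  rw [intervalIntegral.integral_sub (hF.mono Set.left_mem_uIcc hx).1
    (hG.mono Set.left_mem_uIcc hx).1]
  linear_combination hF.2 x hx - hG.2 x hx

lemma absolutelyContinuousOnInterval (h : IsPrimitiveOn F f a b) :
    AbsolutelyContinuousOnInterval (fun x => F a + ∫ t in a..x, f t) a b :=
  (LipschitzWith.const (F a)).lipschitzOnWith.absolutelyContinuousOnInterval.add
    (h.1.absolutelyContinuousOnInterval_intervalIntegral Set.left_mem_uIcc)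

lemma mul (hF : IsPrimitiveOn F f a b) (hG : IsPrimitiveOn G g a b) :
    IsPrimitiveOn (fun t => F t * G t) (fun t => f t * G t + F t * g t) a b := by
  refine ⟨(hF.1.mul_continuousOn hG.continuousOn).add (hG.1.continuousOn_mul hF.continuousOn),
    fun x hx => ?_⟩
  have hsub : Set.uIcc a x ⊆ Set.uIcc a b := Set.uIcc_subset_uIcc_left hx
  have hderiv : ∫ t in a..x, (f t * G t + F t * g t)
      = ∫ t in a..x, deriv ((fun y => F a + ∫ s in a..y, f s) *
          fun y => G a + ∫ s in a..y, g s) t := by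
    refine intervalIntegral.integral_congr_ae ?_
    filter_upwards [hF.1.ae_hasDerivAt_integral, hG.1.ae_hasDerivAt_integral] with t hft hgt ht
    have htab : t ∈ Set.uIcc a b := hsub (Set.uIoc_subset_uIcc ht)
    rw [hF.2 t htab, hG.2 t htab]
    exact (((hft htab a Set.left_mem_uIcc).const_add (F a)).mul
      ((hgt htab a Set.left_mem_uIcc).const_add (G a))).deriv.symm
  have hac := hF.absolutelyContinuousOnInterval.mul hG.absolutelyContinuousOnInterval
  rw [hderiv, (hac.mono hsub).integral_deriv_eq_sub]
  simp [hF.2 x hx, hG.2 x hx]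

lemma abs_sub_le (h : IsPrimitiveOn F f a b) {s t : ℝ} (hs : s ∈ Set.Icc a b)
    (ht : t ∈ Set.Icc a b) : |F s - F t| ≤ ∫ x in a..b, |f x| := by
  wlog hts : t ≤ s generalizing s t
  · rw [abs_sub_comm]
    exact this ht hs (le_of_not_ge hts)
  rw [← h.integral_eq_sub (Set.Icc_subset_uIcc ht) (Set.Icc_subset_uIcc hs)]
  refine (intervalIntegral.abs_integral_le_integral_abs hts).trans ?_
  exact intervalIntegral.integral_mono_interval ht.1 hts hs.2
    (Filter.Eventually.of_forall fun x => abs_nonneg _) h.1.abs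

lemma lpNorm_two_le (h : IsPrimitiveOn F f a b) (hab : a ≤ b) (ha : F a = 0)
    (hf : MemLp f 2 (volume.restrict (Set.Ioc a b))) :
    lpNorm F 2 (volume.restrict (Set.Ioc a b))
      ≤ (b - a) * lpNorm f 2 (volume.restrict (Set.Ioc a b)) := by
  set μ := volume.restrict (Set.Ioc a b)
  have hμ : μ.real Set.univ = b - a := by simp [μ, hab]
  have hsup : ∀ t ∈ Set.Ioc a b, ‖F t‖ ≤ lpNorm f 2 μ * √(b - a) := fun t ht =>
    calc ‖F t‖ = |F t - F a| := by rw [ha, sub_zero, Real.norm_eq_abs]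
      _ ≤ ∫ x in a..b, |f x| := h.abs_sub_le (Set.Ioc_subset_Icc_self ht)
          (Set.left_mem_Icc.2 hab)
      _ ≤ lpNorm f 2 μ * √(b - a) := by
          rw [intervalIntegral.integral_of_le hab, ← hμ]
          exact integral_norm_le_lpNorm_two_mul_sqrt hf
  calc lpNorm F 2 μ ≤ lpNorm f 2 μ * √(b - a) * √(b - a) := by
        simpa [hμ, Real.sqrt_eq_rpow] using lpNorm_le_mul_rpow_measureReal_univ_of_ae_le (μ := μ)
          (mul_nonneg lpNorm_nonneg (Real.sqrt_nonneg (b - a))) two_ne_zero ENNReal.ofNat_ne_top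
          (ae_restrict_of_forall_mem measurableSet_Ioc hsup)
    _ = (b - a) * lpNorm f 2 μ := by
        rw [mul_assoc, Real.mul_self_sqrt (sub_nonneg.2 hab), mul_comm]

end IsPrimitiveOn

lemma memLp_two_Ioc_iff_intervalIntegrable_sq {g : ℝ → ℝ} {a b : ℝ} (hab : a ≤ b)
    (hg : AEStronglyMeasurable g (volume.restrict (Set.Ioc a b))) :
    MemLp g 2 (volume.restrict (Set.Ioc a b)) ↔
      IntervalIntegrable (fun t => g t ^ 2) volume a b := by
  rw [memLp_two_iff_integrable_sq hg, intervalIntegrable_iff_integrableOn_Ioc_of_le hab,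
    IntegrableOn]

lemma intervalIntegrable_mul_of_memLp_two {f g : ℝ → ℝ} {a b : ℝ} (hab : a ≤ b)
    (hf : MemLp f 2 (volume.restrict (Set.Ioc a b)))
    (hg : MemLp g 2 (volume.restrict (Set.Ioc a b))) :
    IntervalIntegrable (fun t => f t * g t) volume a b :=
  (intervalIntegrable_iff_integrableOn_Ioc_of_le hab).2 (hf.integrable_mul hg)

local notation "μΩ" => volume.restrict (Set.Ioc (0 : ℝ) 1)

lemma isPrimitiveOn_zero_one {F f : ℝ → ℝ} (hf : IntervalIntegrable f volume 0 1)
    (h : ∀ x ∈ Set.Icc (0 : ℝ) 1, F x = F 0 + ∫ t in (0 : ℝ)..x, f t) : IsPrimitiveOn F f 0 1 :=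
  ⟨hf, by rwa [Set.uIcc_of_le zero_le_one]⟩

lemma IsPrimitiveOn.memLp {F f : ℝ → ℝ} (h : IsPrimitiveOn F f 0 1) (p : ENNReal) :
    MemLp F p μΩ := by
  have htop := h.memLp_top
  rw [Set.uIoc_of_le zero_le_one] at htop
  exact htop.mono_exponent le_top

lemma MemL2.memLp {g : ℝ → ℝ} (hg : MemL2 g) : MemLp g 2 μΩ :=
  (memLp_two_Ioc_iff_intervalIntegrable_sq zero_le_one hg.1.aestronglyMeasurable).2 hg.2

lemma MemLinf.memLp {g : ℝ → ℝ} (hg : MemLinf g) : MemLp g ⊤ μΩ := by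
  obtain ⟨M, hM⟩ := hg.2
  rw [restrict_Ioo_eq_restrict_Ioc] at hM
  exact memLp_top_of_bound hg.1.aestronglyMeasurable M hM

lemma intervalIntegrable_abs_rpow {g : ℝ → ℝ} (hg : MemLp g 2 μΩ) :
    IntervalIntegrable (fun t => |g t| ^ ((2 : ℝ) / 3)) volume 0 1 :=
  (intervalIntegrable_iff_integrableOn_Ioc_of_le zero_le_one).2
    (integrable_norm_rpow (by norm_num) (ENNReal.ofReal_le_ofNat.2 (by norm_num)) hg)

namespace H1

lemma isPrimitiveOn (u : H1) : IsPrimitiveOn u.val u.dval 0 1 :=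
  isPrimitiveOn_zero_one u.dval_int u.ftc

lemma memLp_dval (u : H1) : MemLp u.dval 2 μΩ :=
  MemL2.memLp ⟨u.dval_meas, u.dval_sq_int⟩

lemma memLp_val (u : H1) : MemLp u.val 2 μΩ := u.isPrimitiveOn.memLp 2

/-- The difference of two functions in `H¹(0,1)`. -/
def sub (u v : H1) : H1 where
  val := fun t => u.val t - v.val t
  dval := fun t => u.dval t - v.dval t
  dval_meas := u.dval_meas.sub v.dval_meas
  dval_int := u.dval_int.sub v.dval_int
  dval_sq_int :=
    have h : MemLp (fun t => u.dval t - v.dval t) 2 μΩ := u.memLp_dval.sub v.memLp_dval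
    (memLp_two_Ioc_iff_intervalIntegrable_sq zero_le_one h.1).1 h
  ftc := by
    simpa only [Set.uIcc_of_le zero_le_one] using (u.isPrimitiveOn.sub v.isPrimitiveOn).2

lemma lpNorm_val_le (u : H1) (h0 : u.val 0 = 0) : lpNorm u.val 2 μΩ ≤ lpNorm u.dval 2 μΩ := by
  simpa using u.isPrimitiveOn.lpNorm_two_le zero_le_one h0 u.memLp_dval

end H1

namespace Coeffs

variable (P : Coeffs)

lemma isPrimitiveOn_a : IsPrimitiveOn P.a P.a' 0 1 := isPrimitiveOn_zero_one P.a'_int P.ftc_a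

lemma isPrimitiveOn_b : IsPrimitiveOn P.b P.b' 0 1 := isPrimitiveOn_zero_one P.b'_int P.ftc_b

lemma memLp_a' : MemLp P.a' ⊤ μΩ := MemLinf.memLp ⟨P.a'_meas, P.a'_bdd⟩

lemma memLp_c : MemLp P.c ⊤ μΩ := MemLinf.memLp ⟨P.c_meas, P.c_bdd⟩

lemma intervalIntegrable_B (u v : H1) : IntervalIntegrable (fun t =>
    P.a t * u.dval t * v.dval t + P.b t * u.dval t * v.val t + P.c t * u.val t * v.val t)
    volume 0 1 :=
  ((intervalIntegrable_mul_of_memLp_two zero_le_one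
    (u.memLp_dval.mul' (P.isPrimitiveOn_a.memLp ⊤)) v.memLp_dval).add
    (intervalIntegrable_mul_of_memLp_two zero_le_one
      (u.memLp_dval.mul' (P.isPrimitiveOn_b.memLp ⊤)) v.memLp_val)).add
    (intervalIntegrable_mul_of_memLp_two zero_le_one (u.memLp_val.mul' P.memLp_c) v.memLp_val)

lemma B_sub_left (u₁ u₂ v : H1) : P.B (u₁.sub u₂) v = P.B u₁ v - P.B u₂ v := by
  unfold B
  rw [← intervalIntegral.integral_sub (P.intervalIntegrable_B _ _) (P.intervalIntegrable_B _ _)]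
  congr 1
  ext t
  simp only [H1.sub]
  ring

lemma B_sub_right (u v₁ v₂ : H1) : P.B u (v₁.sub v₂) = P.B u v₁ - P.B u v₂ := by
  unfold B
  rw [← intervalIntegral.integral_sub (P.intervalIntegrable_B _ _) (P.intervalIntegrable_B _ _)]
  congr 1
  ext t
  simp only [H1.sub]
  ring

lemma a0_mul_lpNorm_sq_le_B (v : H1) (h0 : v.val 0 = 0) (h1 : v.val 1 = 0) :
    P.a0 * lpNorm v.dval 2 μΩ ^ 2 ≤ P.B v v := by
  -- `b v v' = (b v²)' / 2 - b' v² / 2`, and `b v²` vanishes at both endpoints.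
  have hprim := P.isPrimitiveOn_b.mul (v.isPrimitiveOn.mul v.isPrimitiveOn)
  have hzero := hprim.integral_eq_sub Set.left_mem_uIcc Set.right_mem_uIcc
  simp only [h0, h1, mul_zero, sub_zero] at hzero
  have hB : P.B v v = ∫ t in (0 : ℝ)..1, (P.a t * v.dval t * v.dval t
      + P.b t * v.dval t * v.val t + P.c t * v.val t * v.val t - 1 / 2 *
      (P.b' t * (v.val t * v.val t) + P.b t * (v.dval t * v.val t + v.val t * v.dval t))) := by
    rw [intervalIntegral.integral_sub (P.intervalIntegrable_B v v) (hprim.1.const_mul _),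
      intervalIntegral.integral_const_mul, hzero, mul_zero, sub_zero, B]
  rw [hB, lpNorm_two_sq v.memLp_dval.1, ← intervalIntegral.integral_of_le zero_le_one,
    ← intervalIntegral.integral_const_mul]
  refine intervalIntegral.integral_mono_ae_restrict zero_le_one (v.dval_sq_int.const_mul _)
    ((P.intervalIntegrable_B v v).sub (hprim.1.const_mul _)) ?_
  have hcb := P.cb_nonneg
  rw [restrict_Ioo_eq_restrict_Ioc, restrict_Ioc_eq_restrict_Icc] at hcb
  filter_upwards [hcb, self_mem_ae_restrict measurableSet_Icc] with t hcbt htI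
  have hdiff : 0 ≤ (P.a t - P.a0) * v.dval t ^ 2 :=
    mul_nonneg (sub_nonneg.2 (P.a_lb t htI)) (sq_nonneg _)
  have hreact : 0 ≤ (P.c t - P.b' t / 2) * v.val t ^ 2 := mul_nonneg hcbt (sq_nonneg _)
  linarith

lemma memLp_res {f : ℝ → ℝ} (hf : MemL2 f) (w : H1) : MemLp (P.res f w) 2 μΩ :=
  ((hf.memLp.add (w.memLp_dval.mul' P.memLp_a')).sub
    (w.memLp_dval.mul' (P.isPrimitiveOn_b.memLp ⊤))).sub (w.memLp_val.mul' P.memLp_c)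

/-- A Lipschitz constant, with respect to the `H¹₀` seminorm, of the map sending a function to its
residual in `L²`. -/
def resLip : ℝ := lpNorm (P.a' - P.b) ⊤ μΩ + lpNorm P.c ⊤ μΩ

lemma resLip_nonneg : 0 ≤ P.resLip := add_nonneg lpNorm_nonneg lpNorm_nonneg

lemma lpNorm_res_sub_res_le (f : ℝ → ℝ) {u v : H1} (hu : u.val 0 = 0) (hv : v.val 0 = 0) :
    lpNorm (P.res f u - P.res f v) 2 μΩ ≤ P.resLip * lpNorm (u.sub v).dval 2 μΩ := by
  set e := u.sub v with he
  have hres : P.res f u - P.res f v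
      = (fun t => (P.a' - P.b) t * e.dval t) - fun t => P.c t * e.val t := by
    ext t
    simp only [Pi.sub_apply, res, he, H1.sub]
    ring
  have hab : MemLp (P.a' - P.b) ⊤ μΩ := P.memLp_a'.sub (P.isPrimitiveOn_b.memLp ⊤)
  calc lpNorm (P.res f u - P.res f v) 2 μΩ
      ≤ lpNorm (fun t => (P.a' - P.b) t * e.dval t) 2 μΩ + lpNorm (fun t => P.c t * e.val t) 2 μΩ :=
        hres ▸ lpNorm_sub_le (e.memLp_dval.mul' hab) one_le_two
    _ ≤ lpNorm (P.a' - P.b) ⊤ μΩ * lpNorm e.dval 2 μΩ + lpNorm P.c ⊤ μΩ * lpNorm e.val 2 μΩ :=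
        add_le_add (lpNorm_mul_le_lpNorm_top_mul_lpNorm hab e.memLp_dval)
          (lpNorm_mul_le_lpNorm_top_mul_lpNorm P.memLp_c e.memLp_val)
    _ ≤ lpNorm (P.a' - P.b) ⊤ μΩ * lpNorm e.dval 2 μΩ + lpNorm P.c ⊤ μΩ * lpNorm e.dval 2 μΩ := by
        gcongr
        · exact lpNorm_nonneg
        · exact e.lpNorm_val_le (by simp [he, H1.sub, hu, hv])
    _ = P.resLip * lpNorm e.dval 2 μΩ := (add_mul _ _ _).symm

end Coeffs

lemma intervalIntegral_congr_Ioo {f g : ℝ → ℝ} {a b : ℝ} (hab : a ≤ b)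
    (h : ∀ t ∈ Set.Ioo a b, f t = g t) : ∫ t in a..b, f t = ∫ t in a..b, g t := by
  rw [intervalIntegral.integral_of_le hab, intervalIntegral.integral_of_le hab,
    integral_Ioc_eq_integral_Ioo, integral_Ioc_eq_integral_Ioo]
  exact setIntegral_congr_fun measurableSet_Ioo h

namespace Mesh

lemma natCast_pos {N : ℕ} (m : Mesh N) : (0 : ℝ) < N := by
  refine Nat.cast_pos.2 (Nat.pos_of_ne_zero ?_)
  rintro rfl
  exact zero_ne_one (m.x_zero.symm.trans m.x_last)

section Elements

variable {N : ℕ} (m : Mesh N) {i : ℕ}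

lemma h_pos (hi : i < N) : 0 < m.h i := sub_pos.2 (m.x_mono i hi)

lemma x_le_x {j : ℕ} (hij : i ≤ j) (hj : j ≤ N) : m.x i ≤ m.x j := by
  induction j, hij using Nat.le_induction with
  | base => exact le_rfl
  | succ k _ ih => exact (ih (by lia)).trans (m.x_mono k (by lia)).le

lemma x_mem_uIcc (hi : i ≤ N) : m.x i ∈ Set.uIcc (0 : ℝ) 1 :=
  Set.Icc_subset_uIcc ⟨m.x_zero ▸ m.x_le_x (Nat.zero_le i) hi, m.x_last ▸ m.x_le_x hi le_rfl⟩

lemma Ioc_subset (hi : i < N) : Set.Ioc (m.x i) (m.x (i + 1)) ⊆ Set.Ioc 0 1 :=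
  Set.Ioc_subset_Ioc (m.x_zero ▸ m.x_le_x (Nat.zero_le i) hi.le) (m.x_last ▸ m.x_le_x hi le_rfl)

lemma intervalIntegrable {g : ℝ → ℝ} (hg : IntervalIntegrable g volume 0 1) (hi : i < N) :
    IntervalIntegrable g volume (m.x i) (m.x (i + 1)) :=
  hg.mono_set (Set.uIcc_subset_uIcc (m.x_mem_uIcc hi.le) (m.x_mem_uIcc hi))

lemma sum_h : ∑ i ∈ Finset.range N, m.h i = 1 := by
  simp only [h]
  rw [Finset.sum_range_sub, m.x_zero, m.x_last, sub_zero]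

lemma sum_integral {g : ℝ → ℝ} (hg : IntervalIntegrable g volume 0 1) :
    ∑ i ∈ Finset.range N, ∫ t in (m.x i)..(m.x (i + 1)), g t = ∫ t in (0 : ℝ)..1, g t := by
  rw [intervalIntegral.sum_integral_adjacent_intervals (a := m.x) fun k hk =>
    m.intervalIntegrable hg hk, m.x_zero, m.x_last]

/-- Lebesgue measure on the element `K_i`. -/
def elem (i : ℕ) : Measure ℝ := volume.restrict (Set.Ioc (m.x i) (m.x (i + 1)))

instance : IsFiniteMeasure (m.elem i) := inferInstanceAs (IsFiniteMeasure (volume.restrict _))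

lemma elem_real_univ (hi : i < N) : (m.elem i).real Set.univ = m.h i := by
  simp [elem, h, (m.x_mono i hi).le]

lemma integral_elem (hi : i < N) (g : ℝ → ℝ) :
    ∫ t, g t ∂m.elem i = ∫ t in (m.x i)..(m.x (i + 1)), g t :=
  (intervalIntegral.integral_of_le (m.x_mono i hi).le).symm

lemma memLp_elem {g : ℝ → ℝ} {p : ENNReal} (hg : MemLp g p μΩ) (hi : i < N) :
    MemLp g p (m.elem i) :=
  hg.mono_measure (Measure.restrict_mono_set _ (m.Ioc_subset hi))

lemma sum_lpNorm_sq {g : ℝ → ℝ} (hg : MemLp g 2 μΩ) :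
    ∑ i ∈ Finset.range N, lpNorm g 2 (m.elem i) ^ 2 = lpNorm g 2 μΩ ^ 2 := by
  rw [lpNorm_two_sq hg.1, ← intervalIntegral.integral_of_le zero_le_one,
    ← m.sum_integral ((memLp_two_Ioc_iff_intervalIntegrable_sq zero_le_one hg.1).1 hg)]
  refine Finset.sum_congr rfl fun i hi => ?_
  have hiN := Finset.mem_range.1 hi
  rw [lpNorm_two_sq (m.memLp_elem hg hiN).1, m.integral_elem hiN]

end Elements

section Interpolation

variable {N : ℕ} (m : Mesh N) (v : H1) {i : ℕ}

/-- The slope on the element `K_i` of the piecewise linear nodal interpolant of `v`. -/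
def slope (i : ℕ) : ℝ := (v.val (m.x (i + 1)) - v.val (m.x i)) / m.h i

/-- The derivative of the piecewise linear nodal interpolant of `v`. -/
def interpDeriv (t : ℝ) : ℝ :=
  ∑ i ∈ Finset.range N, (Set.Ioc (m.x i) (m.x (i + 1))).indicator (fun _ => m.slope v i) t

lemma measurable_interpDeriv : Measurable (m.interpDeriv v) :=
  Finset.measurable_fun_sum _ fun _ _ => measurable_const.indicator measurableSet_Ioc

lemma memLp_interpDeriv : MemLp (m.interpDeriv v) 2 μΩ :=
  memLp_finsetSum _ fun _ _ => (memLp_const _).indicator measurableSet_Ioc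

lemma interpDeriv_of_mem (hi : i < N) {t : ℝ} (ht : t ∈ Set.Ioc (m.x i) (m.x (i + 1))) :
    m.interpDeriv v t = m.slope v i := by
  rw [interpDeriv, Finset.sum_eq_single_of_mem i (Finset.mem_range.2 hi),
    Set.indicator_of_mem ht]
  intro j hj hji
  refine Set.indicator_of_notMem (fun htj => ?_) _
  rcases lt_or_gt_of_ne hji with hlt | hlt
  · exact (htj.2.trans (m.x_le_x hlt hi.le)).not_gt ht.1
  · exact (ht.2.trans (m.x_le_x hlt (Finset.mem_range.1 hj).le)).not_gt htj.1

/-- The piecewise linear nodal interpolant of `v`. -/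
def interp : H1 where
  val := fun x => v.val 0 + ∫ t in (0 : ℝ)..x, m.interpDeriv v t
  dval := m.interpDeriv v
  dval_meas := m.measurable_interpDeriv v
  dval_int := (intervalIntegrable_iff_integrableOn_Ioc_of_le zero_le_one).2
    ((m.memLp_interpDeriv v).integrable one_le_two)
  dval_sq_int := (memLp_two_Ioc_iff_intervalIntegrable_sq zero_le_one
    (m.memLp_interpDeriv v).1).1 (m.memLp_interpDeriv v)
  ftc := fun x _ => by simp

lemma isPL_interp : m.IsPL (m.interp v) := fun _ hi =>
  ⟨_, fun _ ht => m.interpDeriv_of_mem v hi (Set.Ioo_subset_Ioc_self ht)⟩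

lemma interp_val_node (hi : i ≤ N) : (m.interp v).val (m.x i) = v.val (m.x i) := by
  induction i with
  | zero => simp [interp, m.x_zero]
  | succ k ih =>
    have hk : k < N := hi
    have hftc : ∫ t in (m.x k)..(m.x (k + 1)), (m.interp v).dval t
        = (m.interp v).val (m.x (k + 1)) - (m.interp v).val (m.x k) :=
      (m.interp v).isPrimitiveOn.integral_eq_sub (m.x_mem_uIcc hk.le) (m.x_mem_uIcc hi)
    have hconst : ∫ t in (m.x k)..(m.x (k + 1)), (m.interp v).dval t
        = v.val (m.x (k + 1)) - v.val (m.x k) := by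
      refine (intervalIntegral_congr_Ioo (m.x_mono k hk).le fun t ht =>
        m.interpDeriv_of_mem v hk (Set.Ioo_subset_Ioc_self ht)).trans ?_
      rw [intervalIntegral.integral_const, smul_eq_mul, ← h, slope,
        mul_div_cancel₀ _ (m.h_pos hk).ne']
    linarith [ih hk.le]

/-- The nodal interpolation error of `v`. -/
def interpErr : H1 := v.sub (m.interp v)

lemma interpErr_val_node (hi : i ≤ N) : (m.interpErr v).val (m.x i) = 0 :=
  sub_eq_zero.2 (m.interp_val_node v hi).symm

lemma lpNorm_interpErr_le (hi : i < N) :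
    lpNorm (m.interpErr v).val 2 (m.elem i) ≤ m.h i * lpNorm v.dval 2 (m.elem i) := by
  have hprim := v.isPrimitiveOn.integral_eq_sub (m.x_mem_uIcc hi.le) (m.x_mem_uIcc hi)
  -- On each element the interpolant's slope is the mean of `v'`.
  have hmean : ⨍ t, v.dval t ∂m.elem i = m.slope v i := by
    rw [average_eq, m.elem_real_univ hi, m.integral_elem hi, hprim, smul_eq_mul, inv_mul_eq_div,
      slope]
  have hderiv : (m.interpErr v).dval =ᵐ[m.elem i] fun t => v.dval t - ⨍ s, v.dval s ∂m.elem i :=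
    ae_restrict_of_forall_mem measurableSet_Ioc fun t ht => by
      simp only [interpErr, H1.sub, interp, m.interpDeriv_of_mem v hi ht, hmean]
  calc lpNorm (m.interpErr v).val 2 (m.elem i)
      ≤ m.h i * lpNorm (m.interpErr v).dval 2 (m.elem i) :=
        ((m.interpErr v).isPrimitiveOn.mono (m.x_mem_uIcc hi.le)
          (m.x_mem_uIcc hi)).lpNorm_two_le (m.x_mono i hi).le (m.interpErr_val_node v hi.le)
          (m.memLp_elem (m.interpErr v).memLp_dval hi)
    _ ≤ m.h i * lpNorm v.dval 2 (m.elem i) := by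
        refine mul_le_mul_of_nonneg_left ?_ (m.h_pos hi).le
        rw [lpNorm_congr_ae hderiv]
        exact lpNorm_two_sub_average_le (m.memLp_elem v.memLp_dval hi)

end Interpolation

end Mesh

namespace Coeffs

variable (P : Coeffs) {N : ℕ} (m : Mesh N) {f : ℝ → ℝ}

lemma integral_flux_deriv_eq_zero {z v : H1} (hz : m.IsPL z) (hv : ∀ i ≤ N, v.val (m.x i) = 0) :
    ∫ t in (0 : ℝ)..1, (P.a t * z.dval t * v.dval t + P.a' t * z.dval t * v.val t) = 0 := by
  have hint : IntervalIntegrable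
      (fun t => P.a t * z.dval t * v.dval t + P.a' t * z.dval t * v.val t) volume 0 1 :=
    (intervalIntegrable_mul_of_memLp_two zero_le_one
      (z.memLp_dval.mul' (P.isPrimitiveOn_a.memLp ⊤)) v.memLp_dval).add
      (intervalIntegrable_mul_of_memLp_two zero_le_one (z.memLp_dval.mul' P.memLp_a') v.memLp_val)
  rw [← m.sum_integral hint]
  refine Finset.sum_eq_zero fun i hi => ?_
  have hiN := Finset.mem_range.1 hi
  obtain ⟨s, hs⟩ := hz i hiN
  have hav := (P.isPrimitiveOn_a.mul v.isPrimitiveOn).integral_eq_sub (m.x_mem_uIcc hiN.le)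
    (m.x_mem_uIcc hiN)
  rw [hv i hiN.le, hv (i + 1) hiN, mul_zero, mul_zero, sub_zero] at hav
  calc ∫ t in (m.x i)..(m.x (i + 1)), (P.a t * z.dval t * v.dval t + P.a' t * z.dval t * v.val t)
      = ∫ t in (m.x i)..(m.x (i + 1)), s * (P.a' t * v.val t + P.a t * v.dval t) :=
        intervalIntegral_congr_Ioo (m.x_mono i hiN).le fun t ht => by rw [hs t ht]; ring
    _ = 0 := by rw [intervalIntegral.integral_const_mul, hav, mul_zero]

lemma ip_sub_B_eq_integral_res (hf : MemL2 f) {z v : H1} (hz : m.IsPL z)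
    (hv : ∀ i ≤ N, v.val (m.x i) = 0) :
    ip f v - P.B z v = ∫ t in (0 : ℝ)..1, P.res f z t * v.val t := by
  have hintf : IntervalIntegrable (fun t => f t * v.val t) volume 0 1 :=
    intervalIntegrable_mul_of_memLp_two zero_le_one hf.memLp v.memLp_val
  have hintr : IntervalIntegrable (fun t => P.res f z t * v.val t) volume 0 1 :=
    intervalIntegrable_mul_of_memLp_two zero_le_one (P.memLp_res hf z) v.memLp_val
  have hflux : ∫ t in (0 : ℝ)..1, ((P.a t * z.dval t * v.dval t + P.b t * z.dval t * v.val t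
      + P.c t * z.val t * v.val t) - f t * v.val t + P.res f z t * v.val t) = 0 := by
    refine Eq.trans ?_ (P.integral_flux_deriv_eq_zero m hz hv)
    congr 1
    ext t
    simp only [res]
    ring
  rw [intervalIntegral.integral_add ((P.intervalIntegrable_B z v).sub hintf) hintr,
    intervalIntegral.integral_sub (P.intervalIntegrable_B z v) hintf] at hflux
  simp only [ip, B]
  linarith

variable {P m} {u uh : H1}

lemma IsWeakSolution.error_zero (hu : P.IsWeakSolution f u) (huh : P.IsFESolution f m uh) :
    (u.sub uh).val 0 = 0 ∧ (u.sub uh).val 1 = 0 := by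
  simp [H1.sub, hu.1, hu.2.1, huh.1, huh.2.1]

lemma B_error_eq_integral_res (hf : MemL2 f) (hu : P.IsWeakSolution f u)
    (huh : P.IsFESolution f m uh) :
    P.B (u.sub uh) (u.sub uh)
      = ∫ t in (0 : ℝ)..1, P.res f uh t * (m.interpErr (u.sub uh)).val t := by
  obtain ⟨he0, he1⟩ := hu.error_zero huh
  set e := u.sub uh with he
  have hz0 : (m.interp e).val 0 = 0 := by
    simpa only [m.x_zero, he0] using m.interp_val_node e (Nat.zero_le N)
  have hz1 : (m.interp e).val 1 = 0 := by
    simpa only [m.x_last, he1] using m.interp_val_node e le_rfl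
  have hw0 : (m.interpErr e).val 0 = 0 := sub_eq_zero.2 (he0.trans hz0.symm)
  have hw1 : (m.interpErr e).val 1 = 0 := sub_eq_zero.2 (he1.trans hz1.symm)
  have galerkin : P.B e (m.interp e) = 0 := by
    rw [he, B_sub_left, hu.2.2 _ hz0 hz1, huh.2.2.2 _ hz0 hz1 (m.isPL_interp _), sub_self]
  calc P.B e e = P.B e (m.interpErr e) := by
        rw [Mesh.interpErr, P.B_sub_right e e, galerkin, sub_zero]
    _ = ip f (m.interpErr e) - P.B uh (m.interpErr e) := by
        rw [← hu.2.2 _ hw0 hw1, ← B_sub_left]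
    _ = ∫ t in (0 : ℝ)..1, P.res f uh t * (m.interpErr e).val t :=
        P.ip_sub_B_eq_integral_res m hf huh.2.2.1 fun i hi => m.interpErr_val_node e hi

lemma integral_res_mul_interpErr_le (hf : MemL2 f) (w e : H1) :
    ∫ t in (0 : ℝ)..1, P.res f w t * (m.interpErr e).val t
      ≤ √(∑ i ∈ Finset.range N, (m.h i * lpNorm (P.res f w) 2 (m.elem i)) ^ 2)
        * lpNorm e.dval 2 μΩ := by
  have hr := P.memLp_res hf w
  have hw := (m.interpErr e).memLp_val
  calc ∫ t in (0 : ℝ)..1, P.res f w t * (m.interpErr e).val t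
      = ∑ i ∈ Finset.range N, ∫ t in (m.x i)..(m.x (i + 1)), P.res f w t * (m.interpErr e).val t :=
        (m.sum_integral (intervalIntegrable_mul_of_memLp_two zero_le_one hr hw)).symm
    _ ≤ ∑ i ∈ Finset.range N,
          m.h i * lpNorm (P.res f w) 2 (m.elem i) * lpNorm e.dval 2 (m.elem i) := by
        refine Finset.sum_le_sum fun i hi => ?_
        have hiN := Finset.mem_range.1 hi
        rw [← m.integral_elem hiN, mul_comm (m.h i), mul_assoc]
        exact (integral_mul_le_lpNorm_two_mul_lpNorm_two (m.memLp_elem hr hiN)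
          (m.memLp_elem hw hiN)).trans
          (mul_le_mul_of_nonneg_left (m.lpNorm_interpErr_le e hiN) lpNorm_nonneg)
    _ ≤ √(∑ i ∈ Finset.range N, (m.h i * lpNorm (P.res f w) 2 (m.elem i)) ^ 2)
          * √(∑ i ∈ Finset.range N, lpNorm e.dval 2 (m.elem i) ^ 2) :=
        Real.sum_mul_le_sqrt_mul_sqrt _ _ _
    _ = √(∑ i ∈ Finset.range N, (m.h i * lpNorm (P.res f w) 2 (m.elem i)) ^ 2)
          * lpNorm e.dval 2 μΩ := by
        rw [m.sum_lpNorm_sq e.memLp_dval, Real.sqrt_sq lpNorm_nonneg]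

lemma a0_mul_lpNorm_error_le (hf : MemL2 f) (hu : P.IsWeakSolution f u)
    (huh : P.IsFESolution f m uh) :
    P.a0 * lpNorm (u.sub uh).dval 2 μΩ
      ≤ √(∑ i ∈ Finset.range N, (m.h i * lpNorm (P.res f uh) 2 (m.elem i)) ^ 2) := by
  obtain ⟨he0, he1⟩ := hu.error_zero huh
  have henergy := ((P.a0_mul_lpNorm_sq_le_B (u.sub uh) he0 he1).trans_eq
    (B_error_eq_integral_res hf hu huh)).trans (integral_res_mul_interpErr_le hf uh (u.sub uh))
  rcases (lpNorm_nonneg (f := (u.sub uh).dval) (p := 2) (μ := μΩ)).eq_or_lt with h | h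
  · rw [← h, mul_zero]
    exact Real.sqrt_nonneg _
  · rw [sq, ← mul_assoc] at henergy
    exact le_of_mul_le_mul_right henergy h

end Coeffs

lemma sum_mul_rpow_le_rpow_sum_mul {ι : Type*} {s : Finset ι} {w p : ι → ℝ} {z : ℝ}
    (hz : 0 ≤ z) (hz' : z ≤ 1) (hw : ∀ i ∈ s, 0 ≤ w i) (hw' : ∑ i ∈ s, w i = 1)
    (hp : ∀ i ∈ s, 0 ≤ p i) : ∑ i ∈ s, w i * p i ^ z ≤ (∑ i ∈ s, w i * p i) ^ z :=
  (Real.concaveOn_rpow hz hz').le_map_sum hw hw' hp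

lemma rpow_two_thirds_pow_three {x : ℝ} (hx : 0 ≤ x) : (x ^ ((2 : ℝ) / 3)) ^ 3 = x ^ 2 := by
  rw [← Real.rpow_mul_natCast hx]
  norm_num

lemma rpow_three_halves_rpow_two_thirds {x : ℝ} (hx : 0 ≤ x) :
    (x ^ ((3 : ℝ) / 2)) ^ ((2 : ℝ) / 3) = x := by
  rw [← Real.rpow_mul hx]
  norm_num

namespace Mesh

section Average

variable {N : ℕ} (m : Mesh N) {f g : ℝ → ℝ} {i : ℕ}

lemma avg_nonneg (g : ℝ → ℝ) (i : ℕ) : 0 ≤ m.avg g i := Real.sqrt_nonneg _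

lemma avg_eq_lpNorm_div (hg : MemLp g 2 μΩ) (hi : i < N) :
    m.avg g i = lpNorm g 2 (m.elem i) / √(m.h i) := by
  rw [avg, ← m.integral_elem hi, ← lpNorm_two_sq (m.memLp_elem hg hi).1, one_div_mul_eq_div,
    Real.sqrt_div (sq_nonneg _), Real.sqrt_sq lpNorm_nonneg]

lemma h_mul_avg_sq (hg : MemLp g 2 μΩ) (hi : i < N) :
    m.h i * m.avg g i ^ 2 = lpNorm g 2 (m.elem i) ^ 2 := by
  rw [m.avg_eq_lpNorm_div hg hi, div_pow, Real.sq_sqrt (m.h_pos hi).le,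
    mul_div_cancel₀ _ (m.h_pos hi).ne']

lemma avg_le_add_avg_sub (hf : MemLp f 2 μΩ) (hg : MemLp g 2 μΩ) (hi : i < N) :
    m.avg f i ≤ m.avg g i + m.avg (f - g) i := by
  rw [m.avg_eq_lpNorm_div hf hi, m.avg_eq_lpNorm_div hg hi, m.avg_eq_lpNorm_div (hf.sub hg) hi,
    ← add_div]
  gcongr
  exact lpNorm_le_lpNorm_add_lpNorm_sub' (m.memLp_elem hg hi) one_le_two

lemma avg_sub_comm (f g : ℝ → ℝ) (i : ℕ) : m.avg (f - g) i = m.avg (g - f) i := by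
  simp only [avg, Pi.sub_apply, sub_sq_comm]

lemma avg_le_of_forall_abs_le (hg : MemLp g 2 μΩ) (hi : i < N) {M : ℝ} (hM : 0 ≤ M)
    (h : ∀ t ∈ Set.Ioc (m.x i) (m.x (i + 1)), |g t| ≤ M) : m.avg g i ≤ M := by
  have hle := lpNorm_le_mul_rpow_measureReal_univ_of_ae_le (μ := m.elem i) hM two_ne_zero
    ENNReal.ofNat_ne_top (f := g) (ae_restrict_of_forall_mem measurableSet_Ioc h)
  rw [m.avg_eq_lpNorm_div hg hi, div_le_iff₀ (Real.sqrt_pos.2 (m.h_pos hi))]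
  simpa [m.elem_real_univ hi, Real.sqrt_eq_rpow] using hle

end Average

section CbrtAlpha

variable {N : ℕ} (m : Mesh N) {f g r r' : ℝ → ℝ}

/-- The cube root `∑ᵢ hᵢ ⟨g⟩ᵢ^(2/3)` of the intensity parameter, a discrete counterpart of
`∫₀¹ |g|^(2/3)`. -/
def cbrtAlpha (g : ℝ → ℝ) : ℝ := ∑ i ∈ Finset.range N, m.h i * m.avg g i ^ ((2 : ℝ) / 3)

lemma h_mul_avg_rpow_nonneg (g : ℝ → ℝ) {i : ℕ} (hi : i < N) :
    0 ≤ m.h i * m.avg g i ^ ((2 : ℝ) / 3) :=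
  mul_nonneg (m.h_pos hi).le (Real.rpow_nonneg (m.avg_nonneg g i) _)

lemma cbrtAlpha_nonneg (g : ℝ → ℝ) : 0 ≤ m.cbrtAlpha g :=
  Finset.sum_nonneg fun _ hi => m.h_mul_avg_rpow_nonneg g (Finset.mem_range.1 hi)

lemma alpha_eq_cbrtAlpha_pow (g : ℝ → ℝ) : m.alpha g = m.cbrtAlpha g ^ 3 := rfl

lemma sqrt_alpha (g : ℝ → ℝ) : √(m.alpha g) = m.cbrtAlpha g ^ ((3 : ℝ) / 2) := by
  rw [alpha_eq_cbrtAlpha_pow, Real.sqrt_eq_rpow, ← Real.rpow_natCast,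
    ← Real.rpow_mul (m.cbrtAlpha_nonneg g)]
  norm_num

lemma cbrtAlpha_sub_comm (f g : ℝ → ℝ) : m.cbrtAlpha (f - g) = m.cbrtAlpha (g - f) := by
  simp only [cbrtAlpha, m.avg_sub_comm f g]

lemma cbrtAlpha_le_add_sub (hf : MemLp f 2 μΩ) (hg : MemLp g 2 μΩ) :
    m.cbrtAlpha f ≤ m.cbrtAlpha g + m.cbrtAlpha (f - g) := by
  simp only [cbrtAlpha, ← Finset.sum_add_distrib, ← mul_add]
  refine Finset.sum_le_sum fun i hi => ?_
  have hiN := Finset.mem_range.1 hi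
  refine mul_le_mul_of_nonneg_left ?_ (m.h_pos hiN).le
  calc m.avg f i ^ ((2 : ℝ) / 3) ≤ (m.avg g i + m.avg (f - g) i) ^ ((2 : ℝ) / 3) := by
        gcongr
        · exact m.avg_nonneg f i
        · exact m.avg_le_add_avg_sub hf hg hiN
    _ ≤ m.avg g i ^ ((2 : ℝ) / 3) + m.avg (f - g) i ^ ((2 : ℝ) / 3) :=
        Real.rpow_add_le_add_rpow (m.avg_nonneg g i) (m.avg_nonneg _ i) (by norm_num)
          (by norm_num)

lemma integral_elem_abs_rpow_le (hg : MemLp g 2 μΩ) {i : ℕ} (hi : i < N) :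
    ∫ t in (m.x i)..(m.x (i + 1)), |g t| ^ ((2 : ℝ) / 3)
      ≤ m.h i * m.avg g i ^ ((2 : ℝ) / 3) := by
  have hjensen := integral_norm_rpow_le_lpNorm_rpow_mul (s := 2 / 3) (by norm_num)
    (by norm_num) (m.memLp_elem hg hi)
  have hh := m.h_pos hi
  rw [m.elem_real_univ hi, m.integral_elem hi] at hjensen
  refine hjensen.trans_eq ?_
  rw [Real.rpow_one_sub' hh.le (by norm_num), m.avg_eq_lpNorm_div hg hi,
    Real.div_rpow lpNorm_nonneg (Real.sqrt_nonneg _), Real.sqrt_eq_rpow, ← Real.rpow_mul hh.le,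
    mul_div_left_comm]
  norm_num

lemma integral_abs_rpow_le_cbrtAlpha (hg : MemLp g 2 μΩ) :
    ∫ t in (0 : ℝ)..1, |g t| ^ ((2 : ℝ) / 3) ≤ m.cbrtAlpha g := by
  rw [← m.sum_integral (intervalIntegrable_abs_rpow hg)]
  exact Finset.sum_le_sum fun i hi => m.integral_elem_abs_rpow_le hg (Finset.mem_range.1 hi)

lemma cbrtAlpha_le_lpNorm_rpow (hg : MemLp g 2 μΩ) :
    m.cbrtAlpha g ≤ lpNorm g 2 μΩ ^ ((2 : ℝ) / 3) := by
  have hroot : ∀ {y : ℝ}, 0 ≤ y → (y ^ 2) ^ ((1 : ℝ) / 3) = y ^ ((2 : ℝ) / 3) := fun hy => by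
    rw [← Real.rpow_natCast_mul hy]
    norm_num
  calc m.cbrtAlpha g
      = ∑ i ∈ Finset.range N, m.h i * (m.avg g i ^ 2) ^ ((1 : ℝ) / 3) :=
        Finset.sum_congr rfl fun i _ => by rw [hroot (m.avg_nonneg g i)]
    _ ≤ (∑ i ∈ Finset.range N, m.h i * m.avg g i ^ 2) ^ ((1 : ℝ) / 3) :=
        sum_mul_rpow_le_rpow_sum_mul (by norm_num) (by norm_num)
          (fun i hi => (m.h_pos (Finset.mem_range.1 hi)).le) m.sum_h fun _ _ => sq_nonneg _
    _ = (lpNorm g 2 μΩ ^ 2) ^ ((1 : ℝ) / 3) := by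
        rw [← m.sum_lpNorm_sq hg]
        congr 1
        exact Finset.sum_congr rfl fun i hi => m.h_mul_avg_sq hg (Finset.mem_range.1 hi)
    _ = lpNorm g 2 μΩ ^ ((2 : ℝ) / 3) := hroot lpNorm_nonneg

lemma h_mul_avg_rpow_le_integral_add (hr : IsPrimitiveOn r r' 0 1) {i : ℕ} (hi : i < N) :
    m.h i * m.avg r i ^ ((2 : ℝ) / 3) ≤ (∫ t in (m.x i)..(m.x (i + 1)), |r t| ^ ((2 : ℝ) / 3))
      + m.h i * (∫ t in (m.x i)..(m.x (i + 1)), |r' t|) ^ ((2 : ℝ) / 3) := by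
  have hle := (m.x_mono i hi).le
  set R := ∫ t in (m.x i)..(m.x (i + 1)), |r' t|
  have hR : 0 ≤ R := intervalIntegral.integral_nonneg hle fun _ _ => abs_nonneg _
  have hosc : ∀ t ∈ Set.Icc (m.x i) (m.x (i + 1)), m.avg r i ≤ |r t| + R := fun t ht => by
    refine m.avg_le_of_forall_abs_le (hr.memLp 2) hi (by positivity) fun s hs => ?_
    linarith [abs_sub_abs_le_abs_sub (r s) (r t), (hr.mono (m.x_mem_uIcc hi.le)
      (m.x_mem_uIcc hi)).abs_sub_le (Set.Ioc_subset_Icc_self hs) ht]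
  have hpoint : ∀ t ∈ Set.Icc (m.x i) (m.x (i + 1)),
      m.avg r i ^ ((2 : ℝ) / 3) ≤ |r t| ^ ((2 : ℝ) / 3) + R ^ ((2 : ℝ) / 3) := fun t ht =>
    (Real.rpow_le_rpow (m.avg_nonneg r i) (hosc t ht) (by norm_num)).trans
      (Real.rpow_add_le_add_rpow (abs_nonneg _) hR (by norm_num) (by norm_num))
  have hint := m.intervalIntegrable (intervalIntegrable_abs_rpow (hr.memLp 2)) hi
  have hconst : ∀ C : ℝ, ∫ _ in (m.x i)..(m.x (i + 1)), C = m.h i * C := fun C =>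
    intervalIntegral.integral_const C
  rw [← hconst, ← hconst, ← intervalIntegral.integral_add hint (by simp)]
  exact intervalIntegral.integral_mono_on hle (by simp) (hint.add (by simp)) hpoint

lemma cbrtAlpha_le_integral_add (hr : IsPrimitiveOn r r' 0 1) {H : ℝ}
    (hH : ∀ i < N, m.h i ≤ H) :
    m.cbrtAlpha r ≤ (∫ t in (0 : ℝ)..1, |r t| ^ ((2 : ℝ) / 3)) + (H * L1 r') ^ ((2 : ℝ) / 3) := by
  set R : ℕ → ℝ := fun i => ∫ t in (m.x i)..(m.x (i + 1)), |r' t| with hR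
  have hR0 : ∀ i ∈ Finset.range N, 0 ≤ R i := fun i hi =>
    intervalIntegral.integral_nonneg (m.x_mono i (Finset.mem_range.1 hi)).le
      fun _ _ => abs_nonneg _
  have hh : ∀ i ∈ Finset.range N, 0 ≤ m.h i := fun i hi => (m.h_pos (Finset.mem_range.1 hi)).le
  have hosc : ∑ i ∈ Finset.range N, m.h i * R i ^ ((2 : ℝ) / 3) ≤ (H * L1 r') ^ ((2 : ℝ) / 3) :=
    calc ∑ i ∈ Finset.range N, m.h i * R i ^ ((2 : ℝ) / 3)
        ≤ (∑ i ∈ Finset.range N, m.h i * R i) ^ ((2 : ℝ) / 3) :=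
          sum_mul_rpow_le_rpow_sum_mul (by norm_num) (by norm_num) hh m.sum_h hR0
      _ ≤ (∑ i ∈ Finset.range N, H * R i) ^ ((2 : ℝ) / 3) := by
          refine Real.rpow_le_rpow (Finset.sum_nonneg fun i hi => mul_nonneg (hh i hi) (hR0 i hi))
            (Finset.sum_le_sum fun i hi => ?_) (by norm_num)
          exact mul_le_mul_of_nonneg_right (hH i (Finset.mem_range.1 hi)) (hR0 i hi)
      _ = (H * L1 r') ^ ((2 : ℝ) / 3) := by rw [← Finset.mul_sum, hR, m.sum_integral hr.1.abs, L1]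
  refine le_trans ?_ (add_le_add_right hosc _)
  rw [← m.sum_integral (intervalIntegrable_abs_rpow (hr.memLp 2)), ← Finset.sum_add_distrib]
  exact Finset.sum_le_sum fun i hi => m.h_mul_avg_rpow_le_integral_add hr (Finset.mem_range.1 hi)

end CbrtAlpha

section Equidistribution

variable {N : ℕ} (m : Mesh N) (g : ℝ → ℝ)

lemma rho_eq (i : ℕ) :
    m.rho g i = (1 + ((m.cbrtAlpha g)⁻¹ * m.avg g i ^ ((2 : ℝ) / 3)) ^ 3) ^ ((1 : ℝ) / 3) := by
  rw [mul_pow, rpow_two_thirds_pow_three (m.avg_nonneg g i), inv_pow, ← alpha_eq_cbrtAlpha_pow, rho]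

lemma inv_cbrtAlpha_mul_avg_rpow_nonneg (i : ℕ) :
    0 ≤ (m.cbrtAlpha g)⁻¹ * m.avg g i ^ ((2 : ℝ) / 3) :=
  mul_nonneg (inv_nonneg.2 (m.cbrtAlpha_nonneg g)) (Real.rpow_nonneg (m.avg_nonneg g i) _)

lemma one_le_rho (i : ℕ) : 1 ≤ m.rho g i := by
  rw [rho_eq]
  exact Real.one_le_rpow (le_add_of_nonneg_right
    (pow_nonneg (m.inv_cbrtAlpha_mul_avg_rpow_nonneg g i) 3)) (by norm_num)

lemma inv_cbrtAlpha_mul_avg_rpow_le_rho (i : ℕ) :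
    (m.cbrtAlpha g)⁻¹ * m.avg g i ^ ((2 : ℝ) / 3) ≤ m.rho g i := by
  have hy := m.inv_cbrtAlpha_mul_avg_rpow_nonneg g i
  rw [rho_eq, one_div, Real.le_rpow_inv_iff_of_pos hy (by positivity) (by norm_num)]
  norm_cast
  linarith

lemma rho_le (i : ℕ) : m.rho g i ≤ 1 + (m.cbrtAlpha g)⁻¹ * m.avg g i ^ ((2 : ℝ) / 3) := by
  have hy := m.inv_cbrtAlpha_mul_avg_rpow_nonneg g i
  rw [rho_eq, one_div, Real.rpow_inv_le_iff_of_pos (by positivity) (by positivity) (by norm_num)]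
  norm_cast
  nlinarith

lemma sigma_le_two : m.sigma g ≤ 2 :=
  calc m.sigma g
      ≤ ∑ i ∈ Finset.range N,
          (m.h i + (m.cbrtAlpha g)⁻¹ * (m.h i * m.avg g i ^ ((2 : ℝ) / 3))) := by
        refine Finset.sum_le_sum fun i hi => ?_
        have hrho := mul_le_mul_of_nonneg_right (m.rho_le g i) (m.h_pos (Finset.mem_range.1 hi)).le
        linarith
    _ = 1 + (m.cbrtAlpha g)⁻¹ * m.cbrtAlpha g := by
        rw [Finset.sum_add_distrib, ← Finset.mul_sum, m.sum_h, cbrtAlpha]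
    _ ≤ 2 := by linarith [inv_mul_le_one (a := m.cbrtAlpha g)]

variable {m g}

namespace IsEquidistributing

lemma rho_mul_h_le (hE : m.IsEquidistributing g) {i : ℕ} (hi : i < N) :
    m.rho g i * m.h i ≤ 2 / N := by
  rw [hE i hi]
  exact div_le_div_of_nonneg_right (m.sigma_le_two g) (Nat.cast_nonneg N)

lemma h_le (hE : m.IsEquidistributing g) {i : ℕ} (hi : i < N) : m.h i ≤ 2 / N :=
  (le_mul_of_one_le_left (m.h_pos hi).le (m.one_le_rho g i)).trans (hE.rho_mul_h_le hi)

lemma h_mul_avg_rpow_le (hE : m.IsEquidistributing g) {i : ℕ} (hi : i < N) :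
    m.h i * m.avg g i ^ ((2 : ℝ) / 3) ≤ 2 / N * m.cbrtAlpha g := by
  rcases (m.cbrtAlpha_nonneg g).eq_or_lt with hzero | hpos
  · rw [← hzero, mul_zero, hzero]
    exact Finset.single_le_sum (f := fun i => m.h i * m.avg g i ^ ((2 : ℝ) / 3))
      (fun j hj => m.h_mul_avg_rpow_nonneg g (Finset.mem_range.1 hj)) (Finset.mem_range.2 hi)
  · rw [← div_le_iff₀ hpos]
    calc m.h i * m.avg g i ^ ((2 : ℝ) / 3) / m.cbrtAlpha g
        = (m.cbrtAlpha g)⁻¹ * m.avg g i ^ ((2 : ℝ) / 3) * m.h i := by ring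
      _ ≤ m.rho g i * m.h i :=
          mul_le_mul_of_nonneg_right (m.inv_cbrtAlpha_mul_avg_rpow_le_rho g i) (m.h_pos hi).le
      _ ≤ 2 / N := hE.rho_mul_h_le hi

lemma sqrt_sum_h_mul_lpNorm_sq_le (hE : m.IsEquidistributing g) (hg : MemLp g 2 μΩ) :
    √(∑ i ∈ Finset.range N, (m.h i * lpNorm g 2 (m.elem i)) ^ 2) ≤ 3 / N * √(m.alpha g) := by
  have hN : (0 : ℝ) < N := m.natCast_pos
  have hβ := m.cbrtAlpha_nonneg g
  have helem : ∀ i ∈ Finset.range N,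
      (m.h i * lpNorm g 2 (m.elem i)) ^ 2 ≤ (2 / N * m.cbrtAlpha g) ^ 3 := fun i hi => by
    have hiN := Finset.mem_range.1 hi
    calc (m.h i * lpNorm g 2 (m.elem i)) ^ 2
        = (m.h i * m.avg g i ^ ((2 : ℝ) / 3)) ^ 3 := by
          rw [mul_pow, ← m.h_mul_avg_sq hg hiN, mul_pow (m.h i),
            rpow_two_thirds_pow_three (m.avg_nonneg g i)]
          ring
      _ ≤ (2 / N * m.cbrtAlpha g) ^ 3 :=
          pow_le_pow_left₀ (m.h_mul_avg_rpow_nonneg g hiN) (hE.h_mul_avg_rpow_le hiN) 3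
  have hsum : ∑ i ∈ Finset.range N, (m.h i * lpNorm g 2 (m.elem i)) ^ 2
      ≤ 8 / N ^ 2 * m.alpha g := by
    refine (Finset.sum_le_card_nsmul _ _ _ helem).trans_eq ?_
    rw [Finset.card_range, nsmul_eq_mul, alpha_eq_cbrtAlpha_pow]
    field_simp
    ring
  have hα : 0 ≤ m.alpha g := pow_nonneg hβ 3
  refine Real.sqrt_le_iff.2 ⟨by positivity, hsum.trans ?_⟩
  rw [mul_pow, Real.sq_sqrt hα, div_pow]
  gcongr
  norm_num

end IsEquidistributing

end Equidistribution

end Mesh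

namespace Coeffs

variable (P : Coeffs)

/-- The constant `c` of the bounds on `α_h`: `2` accounts for the element lengths `hᵢ ≤ 2 / N`, the
other term for the distance between the continuous and the discrete residual. -/
def alphaConst : ℝ := 2 + 3 * P.resLip / P.a0

lemma two_le_alphaConst : 2 ≤ P.alphaConst :=
  le_add_of_nonneg_right (div_nonneg (mul_nonneg zero_le_three P.resLip_nonneg) P.a0_pos.le)

variable {P} {N : ℕ} {m : Mesh N} {f : ℝ → ℝ} {u uh : H1}

lemma lpNorm_res_sub_le (hf : MemL2 f) (hu : P.IsWeakSolution f u) (huh : P.IsFESolution f m uh)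
    (hE : m.IsEquidistributing (P.res f uh)) :
    lpNorm (P.res f u - P.res f uh) 2 μΩ ≤ P.alphaConst / N * √(m.alpha (P.res f uh)) := by
  have herr := (a0_mul_lpNorm_error_le hf hu huh).trans
    (hE.sqrt_sum_h_mul_lpNorm_sq_le (P.memLp_res hf uh))
  rw [mul_comm, ← le_div_iff₀ P.a0_pos] at herr
  calc lpNorm (P.res f u - P.res f uh) 2 μΩ
      ≤ P.resLip * lpNorm (u.sub uh).dval 2 μΩ := P.lpNorm_res_sub_res_le f hu.1 huh.1
    _ ≤ P.resLip * (3 / N * √(m.alpha (P.res f uh)) / P.a0) :=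
        mul_le_mul_of_nonneg_left herr P.resLip_nonneg
    _ = 3 * P.resLip / P.a0 / N * √(m.alpha (P.res f uh)) := by ring
    _ ≤ P.alphaConst / N * √(m.alpha (P.res f uh)) := by
        gcongr
        exact le_add_of_nonneg_left zero_le_two

lemma cbrtAlpha_res_sub_le (hf : MemL2 f) (hu : P.IsWeakSolution f u)
    (huh : P.IsFESolution f m uh) (hE : m.IsEquidistributing (P.res f uh)) :
    m.cbrtAlpha (P.res f u - P.res f uh)
      ≤ (P.alphaConst / N) ^ ((2 : ℝ) / 3) * m.cbrtAlpha (P.res f uh) := by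
  have hβ := m.cbrtAlpha_nonneg (P.res f uh)
  have hc : 0 ≤ P.alphaConst / N :=
    div_nonneg (zero_le_two.trans P.two_le_alphaConst) N.cast_nonneg
  calc m.cbrtAlpha (P.res f u - P.res f uh)
      ≤ lpNorm (P.res f u - P.res f uh) 2 μΩ ^ ((2 : ℝ) / 3) :=
        m.cbrtAlpha_le_lpNorm_rpow ((P.memLp_res hf u).sub (P.memLp_res hf uh))
    _ ≤ (P.alphaConst / N * √(m.alpha (P.res f uh))) ^ ((2 : ℝ) / 3) :=
        Real.rpow_le_rpow lpNorm_nonneg (lpNorm_res_sub_le hf hu huh hE) (by norm_num)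
    _ = (P.alphaConst / N) ^ ((2 : ℝ) / 3) * m.cbrtAlpha (P.res f uh) := by
        rw [Real.mul_rpow hc (Real.sqrt_nonneg _), m.sqrt_alpha,
          rpow_three_halves_rpow_two_thirds hβ]

lemma integral_abs_res_rpow_le (hf : MemL2 f) (hu : P.IsWeakSolution f u)
    (huh : P.IsFESolution f m uh) (hE : m.IsEquidistributing (P.res f uh)) :
    ∫ t in (0 : ℝ)..1, |P.res f u t| ^ ((2 : ℝ) / 3)
      ≤ (1 + (P.alphaConst / N) ^ ((2 : ℝ) / 3)) * m.cbrtAlpha (P.res f uh) := by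
  linarith [m.integral_abs_rpow_le_cbrtAlpha (P.memLp_res hf u),
    m.cbrtAlpha_le_add_sub (P.memLp_res hf u) (P.memLp_res hf uh),
    cbrtAlpha_res_sub_le hf hu huh hE]

lemma cbrtAlpha_res_le (hf : MemL2 f) (hu : P.IsWeakSolution f u) {r' : ℝ → ℝ}
    (hr' : HasL1Deriv (P.res f u) r') (huh : P.IsFESolution f m uh)
    (hE : m.IsEquidistributing (P.res f uh)) :
    (1 - (P.alphaConst / N) ^ ((2 : ℝ) / 3)) * m.cbrtAlpha (P.res f uh)
      ≤ (∫ t in (0 : ℝ)..1, |P.res f u t| ^ ((2 : ℝ) / 3))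
        + (P.alphaConst * L1 r' / N) ^ ((2 : ℝ) / 3) := by
  have hL1 : 0 ≤ L1 r' := intervalIntegral.integral_nonneg zero_le_one fun _ _ => abs_nonneg _
  have hosc : (2 / N * L1 r') ^ ((2 : ℝ) / 3) ≤ (P.alphaConst * L1 r' / N) ^ ((2 : ℝ) / 3) := by
    rw [div_mul_eq_mul_div]
    gcongr
    exact P.two_le_alphaConst
  linarith [m.cbrtAlpha_le_integral_add (isPrimitiveOn_zero_one hr'.2.1 hr'.2.2)
      fun i hi => hE.h_le hi,
    m.cbrtAlpha_le_add_sub (P.memLp_res hf uh) (P.memLp_res hf u),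
    m.cbrtAlpha_sub_comm (P.res f uh) (P.res f u), cbrtAlpha_res_sub_le hf hu huh hE]

end Coeffs

lemma rpow_neg_mul_rpow_le_rpow {q L β z : ℝ} (hz : 0 ≤ z) (hq : 0 < q) (hL : 0 ≤ L)
    (h : L ≤ q * β) : q ^ (-z) * L ^ z ≤ β ^ z := by
  rw [Real.rpow_neg hq.le, inv_mul_eq_div, ← Real.div_rpow hL hq.le]
  exact Real.rpow_le_rpow (div_nonneg hL hq.le) ((div_le_iff₀' hq).2 h) hz

lemma rpow_le_rpow_neg_mul_rpow {q L β z : ℝ} (hz : 0 ≤ z) (hq : 0 < q) (hβ : 0 ≤ β)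
    (h : q * β ≤ L) : β ^ z ≤ q ^ (-z) * L ^ z := by
  have hle := (le_div_iff₀' hq).2 h
  rw [Real.rpow_neg hq.le, inv_mul_eq_div,
    ← Real.div_rpow ((mul_nonneg hq.le hβ).trans h) hq.le]
  exact Real.rpow_le_rpow hβ hle hz

theorem statement1_general (P : Coeffs) :
    ∃ c : ℝ, 0 < c ∧
      ∀ f : ℝ → ℝ, MemL2 f →
      ∀ u : H1, P.IsWeakSolution f u →
      ∀ (N : ℕ) (m : Mesh N) (uh : H1), P.IsFESolution f m uh →
        m.IsEquidistributing (P.res f uh) →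
        (1 + (c / N) ^ ((2 : ℝ) / 3)) ^ (-(3 : ℝ) / 2) * Lp23 (P.res f u)
            ≤ √(m.alpha (P.res f uh)) ∧
        ∀ r' : ℝ → ℝ, HasL1Deriv (P.res f u) r' → c < N →
          √(m.alpha (P.res f uh)) ≤ (1 - (c / N) ^ ((2 : ℝ) / 3)) ^ (-(3 : ℝ) / 2) *
            (Lp23 (P.res f u) ^ ((2 : ℝ) / 3) + (c * L1 r' / N) ^ ((2 : ℝ) / 3))
              ^ ((3 : ℝ) / 2) := by
  have hc : 0 < P.alphaConst := two_pos.trans_le P.two_le_alphaConst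
  refine ⟨P.alphaConst, hc, fun f hf u hu N m uh huh hE => ?_⟩
  have hI : 0 ≤ ∫ t in (0 : ℝ)..1, |P.res f u t| ^ ((2 : ℝ) / 3) :=
    intervalIntegral.integral_nonneg zero_le_one fun _ _ => by positivity
  rw [m.sqrt_alpha, neg_div, Lp23, rpow_three_halves_rpow_two_thirds hI]
  refine ⟨rpow_neg_mul_rpow_le_rpow (by norm_num) (by positivity) hI
    (Coeffs.integral_abs_res_rpow_le hf hu huh hE), fun r' hr' hN => ?_⟩
  have hκ : (P.alphaConst / N) ^ ((2 : ℝ) / 3) < 1 :=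
    Real.rpow_lt_one (by positivity) ((div_lt_one m.natCast_pos).2 hN) (by norm_num)
  exact rpow_le_rpow_neg_mul_rpow (by norm_num) (sub_pos.2 hκ) (m.cbrtAlpha_nonneg _)
    (Coeffs.cbrtAlpha_res_le hf hu hr' huh hE)

/-- bounds on α_h for equidistributing meshes when r' ∈ L¹ (Theorem 2.1). -/
theorem statement1 (P : Coeffs) :
    ∃ c : ℝ, 0 < c ∧
      ∀ f : ℝ → ℝ, MemL2 f →
      ∀ u : H1, P.IsWeakSolution f u →
      ∀ r' : ℝ → ℝ, HasL1Deriv (P.res f u) r' →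
      ∀ N : ℕ, c < (N:ℝ) →
      ∀ (m : Mesh N) (uh : H1), P.IsFESolution f m uh →
        m.IsEquidistributing (P.res f uh) →
        (1 + (c / (N:ℝ)) ^ ((2:ℝ)/3)) ^ (-(3:ℝ)/2) * Lp23 (P.res f u)
            ≤ Real.sqrt (m.alpha (P.res f uh)) ∧
        Real.sqrt (m.alpha (P.res f uh))
            ≤ (1 - (c / (N:ℝ)) ^ ((2:ℝ)/3)) ^ (-(3:ℝ)/2) *
              ((Lp23 (P.res f u)) ^ ((2:ℝ)/3)
                + (c * L1 r' / (N:ℝ)) ^ ((2:ℝ)/3)) ^ ((3:ℝ)/2) := by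
  obtain ⟨c, hc, hbounds⟩ := statement1_general P
  exact ⟨c, hc, fun f hf u hu r' hr' N hN m uh huh hE =>
    (hbounds f hf u hu N m uh huh hE).imp_right fun hupper => hupper r' hr' hN⟩

end EquidMesh
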